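/- Positivity preservation of the high-order multidimensional DG scheme with penalty term (Theorem 4.3, one cell, one forward-Euler step): Let d = 2, N ≥ 1, |K| > 0, edge lengths ℓ₁,…,ℓ_N > 0 with perimeter |∂K| = Σⱼ ℓⱼ, and unit outward normals ξ⁽¹⁾,…,ξ⁽ᴺ⁾ ∈ ℝ² with Σⱼ ℓⱼ ξ⁽ʲ⁾ = 0. Let Q ≥ 1 with edge-quadrature weights ω₁,…,ω_Q > 0, Σ_q ω_q = 1. For each edge j and quadrature index q let U_{jq}^{int}, U_{jq}^{ext} ∈ 𝒢 (with densities ρ_{jq}^{int}, velocities v_{jq}^{int}, magnetic fields B_{jq}^{int}, B_{jq}^{ext}). Suppose the cell average decomposes with positive weights as Ū = Σ_{q=1}^{Q̃} ϖ̃_q Ũ_q + Σ_{j=1}^{N} Σ_{q=1}^{Q} ϖ_{jq} U_{jq}^{int}, where Ũ_q ∈ 𝒢, ϖ̃_q > 0, ϖ_{jq} > 0 and Σ_q ϖ̃_q + Σ_{j,q} ϖ_{jq} = 1 (a quadrature exact for the degree-k solution polynomial whose boundary nodes are the edge Gauss points). Assume the locally divergence-free identity Σ_{j=1}^{N} Σ_{q=1}^{Q}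 ℓⱼ ω_q ⟨ξ⁽ʲ⁾, B_{jq}^{int}⟩ = 0 (valid since the inner magnetic polynomial is divergence-free on K and the edge quadrature is exact). For each (j, q) let wave speeds satisfy σ_{jq}^{r} ≥ α_r(U_{jq}^{ext}, U_{jq}^{int}; ξ⁽ʲ⁾) and σ_{jq}^{l} ≤ α_l(U_{jq}^{int}, U_{jq}^{ext}; ξ⁽ʲ⁾), with σ_{jq}^{±} the clamped speeds and η_{jq} = σ_{jq}^{−}/(σ_{jq}^{+} − σ_{jq}^{−}) ∈ [−1, 0]. Define α̂_{jq} = max{ ⟨ξ⁽ʲ⁾, v_{jq}^{int}⟩ , |∂K|⁻¹ Σ_{i=1}^{N} ℓᵢ ⟨ξ⁽ʲ⁾ − ξ⁽ⁱ⁾, (√ρ_{jq}^{int} v_{jq}^{int} + √ρ_{iq}^{int} v_{iq}^{int})/(√ρ_{jq}^{int} + √ρ_{iq}^{int})⟩ } + 𝒞(U_{jq}^{int}; ξ⁽ʲ⁾) + 2|∂K|⁻¹ Σ_{i=1}^{N} ℓᵢ |B_{jq}^{int} − B_{iq}^{int}|/(√ρ_{jq}^{int} + √ρ_{iq}^{int}),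 and α_{jq} = α̂_{jq} − σ_{jq}^{−} − η_{jq}·(ρ_{jq}^{int})^{-1/2}·|⟨ξ⁽ʲ⁾, B_{jq}^{int} − B_{jq}^{ext}⟩|. If Δt > 0 satisfies the CFL condition Δt·(ℓⱼ/|K|)·α_{jq} < ϖ_{jq}/ω_q for all j, q, then the update Ū' = Ū − (Δt/|K|) Σ_{j,q} ℓⱼ ω_q [ F̂(U_{jq}^{int}, U_{jq}^{ext}; ξ⁽ʲ⁾) − η_{jq} ⟨ξ⁽ʲ⁾, B_{jq}^{ext} − B_{jq}^{int}⟩ S(U_{jq}^{int}) ] belongs to 𝒢. -/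

import Mathlib

noncomputable section

open Finset

/-- An MHD state `U = (ρ, m, B, E)` viewed as a vector in `ℝ⁸`. -/
abbrev MHDState := Fin 8 → ℝ

namespace MHD

/-- Build a state from density, momentum, magnetic field, total energy. -/
def mk (ρ : ℝ) (m B : Fin 3 → ℝ) (E : ℝ) : MHDState :=
  ![ρ, m 0, m 1, m 2, B 0, B 1, B 2, E]

/-- Density component. -/
def dens (U : MHDState) : ℝ := U 0

/-- Momentum components. -/
def mom (U : MHDState) : Fin 3 → ℝ := ![U 1, U 2, U 3]

/-- Magnetic field components. -/
def magB (U : MHDState) : Fin 3 → ℝ := ![U 4, U 5, U 6]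

/-- Total energy component. -/
def toten (U : MHDState) : ℝ := U 7

/-- Euclidean dot product on `ℝ³`. -/
def dot3 (a b : Fin 3 → ℝ) : ℝ := ∑ k, a k * b k

/-- Squared Euclidean norm on `ℝ³`. -/
def sq3 (a : Fin 3 → ℝ) : ℝ := dot3 a a

/-- Euclidean norm on `ℝ³`. -/
def norm3 (a : Fin 3 → ℝ) : ℝ := Real.sqrt (sq3 a)

/-- Velocity `v = m / ρ`. -/
def vel (U : MHDState) : Fin 3 → ℝ := fun k => mom U k / dens U

/-- Internal energy `𝓔(U) = E − (|m|²/ρ + |B|²)/2`. -/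
def intE (U : MHDState) : ℝ := toten U - (sq3 (mom U) / dens U + sq3 (magB U)) / 2

/-- Specific internal energy `e = 𝓔(U)/ρ`. -/
def specE (U : MHDState) : ℝ := intE U / dens U

/-- The admissible state set `𝒢`. -/
def Gset : Set MHDState := {U | 0 < dens U ∧ 0 < intE U}

/-- The set `𝒢_ρ` of states with positive density. -/
def Grho : Set MHDState := {U | 0 < dens U}

/-- Euclidean dot product on `ℝ⁸`. -/
def dot8 (U V : MHDState) : ℝ := ∑ i, U i * V i

/-- The vector `n* = (|v*|²/2, −v*, −B*, 1)`. -/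
def nstar (vs Bs : Fin 3 → ℝ) : MHDState :=
  mk (sq3 vs / 2) (fun k => -vs k) (fun k => -Bs k) 1

/-- The set `𝒢*`. -/
def GstarSet : Set MHDState :=
  {U | 0 < dens U ∧ ∀ vs Bs : Fin 3 → ℝ, 0 < dot8 U (nstar vs Bs) + sq3 Bs / 2}

/-- Equation of state assumption: for `ρ > 0`, `e > 0 ↔ p(ρ,e) > 0`. -/
def IsEOS (pfun : ℝ → ℝ → ℝ) : Prop :=
  ∀ ρ e : ℝ, 0 < ρ → (0 < e ↔ 0 < pfun ρ e)

/-- Pressure of a state, via the equation of state. -/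
def pres (pfun : ℝ → ℝ → ℝ) (U : MHDState) : ℝ := pfun (dens U) (specE U)

/-- Total pressure `p + |B|²/2`. -/
def ptot (pfun : ℝ → ℝ → ℝ) (U : MHDState) : ℝ := pres pfun U + sq3 (magB U) / 2

/-- The `i`-th flux `F_i(U)`. -/
def flux (pfun : ℝ → ℝ → ℝ) (i : Fin 3) (U : MHDState) : MHDState :=
  mk (dens U * vel U i)
    (fun k => dens U * vel U i * vel U k - magB U i * magB U k
      + ptot pfun U * (if k = i then 1 else 0))
    (fun k => vel U i * magB U k - magB U i * vel U k)
    (vel U i * (toten U + ptot pfun U) - magB U i * dot3 (vel U) (magB U))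

/-- Directional inner product `⟨ξ, w⟩ = Σ_{k<d} ξ_k w_k` for `ξ ∈ ℝ^d`, `w ∈ ℝ³`, `d ≤ 3`. -/
def dirDot {d : ℕ} (hd : d ≤ 3) (ξ : Fin d → ℝ) (w : Fin 3 → ℝ) : ℝ :=
  ∑ k, ξ k * w (Fin.castLE hd k)

/-- Directional flux `⟨ξ, F(U)⟩ = Σ_{i<d} ξ_i F_i(U)`. -/
def dirFlux (pfun : ℝ → ℝ → ℝ) {d : ℕ} (hd : d ≤ 3) (ξ : Fin d → ℝ) (U : MHDState) :
    MHDState :=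
  ∑ i, ξ i • flux pfun (Fin.castLE hd i) U

/-- `ξ` is a unit vector. -/
def unitVec {d : ℕ} (ξ : Fin d → ℝ) : Prop := (∑ k, (ξ k) ^ 2) = 1

/-- `𝒞_s(U) = p / (ρ √(2e))`. -/
def soundC (pfun : ℝ → ℝ → ℝ) (U : MHDState) : ℝ :=
  pres pfun U / (dens U * Real.sqrt (2 * specE U))

/-- `𝒞(U; ξ)`. -/
def waveC (pfun : ℝ → ℝ → ℝ) {d : ℕ} (hd : d ≤ 3) (ξ : Fin d → ℝ) (U : MHDState) : ℝ :=
  Real.sqrt ((soundC pfun U ^ 2 + sq3 (magB U) / dens U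
    + Real.sqrt ((soundC pfun U ^ 2 + sq3 (magB U) / dens U) ^ 2
      - 4 * soundC pfun U ^ 2 * dirDot hd ξ (magB U) ^ 2 / dens U)) / 2)

/-- Roe-type averaged velocity `v̄ = (√ρ v + √ρ̃ ṽ)/(√ρ + √ρ̃)`. -/
def roeV (U Ut : MHDState) : Fin 3 → ℝ := fun k =>
  (Real.sqrt (dens U) * vel U k + Real.sqrt (dens Ut) * vel Ut k)
    / (Real.sqrt (dens U) + Real.sqrt (dens Ut))

/-- `α_r(U, Ũ; ξ)`. -/
def alphaR (pfun : ℝ → ℝ → ℝ) {d : ℕ} (hd : d ≤ 3) (ξ : Fin d → ℝ) (U Ut : MHDState) : ℝ :=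
  max (dirDot hd ξ (vel U)) (dirDot hd ξ (roeV U Ut)) + waveC pfun hd ξ U
    + norm3 (magB U - magB Ut) / (Real.sqrt (dens U) + Real.sqrt (dens Ut))

/-- `α_l(U, Ũ; ξ)`. -/
def alphaL (pfun : ℝ → ℝ → ℝ) {d : ℕ} (hd : d ≤ 3) (ξ : Fin d → ℝ) (U Ut : MHDState) : ℝ :=
  min (dirDot hd ξ (vel U)) (dirDot hd ξ (roeV U Ut)) - waveC pfun hd ξ U
    - norm3 (magB U - magB Ut) / (Real.sqrt (dens U) + Real.sqrt (dens Ut))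

/-- `α_⋆(U, Ũ; ξ)`. -/
def alphaS (pfun : ℝ → ℝ → ℝ) {d : ℕ} (hd : d ≤ 3) (ξ : Fin d → ℝ) (U Ut : MHDState) : ℝ :=
  max (|dirDot hd ξ (vel U)|) (|dirDot hd ξ (roeV U Ut)|) + waveC pfun hd ξ U
    + norm3 (magB U - magB Ut) / (Real.sqrt (dens U) + Real.sqrt (dens Ut))

/-- The vector `θ(U, v*, B*) = 2^{−1/2}(B − B*, √ρ(v − v*), √(2ρe)) ∈ ℝ⁷`. -/
def theta (U : MHDState) (vs Bs : Fin 3 → ℝ) : Fin 7 → ℝ :=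
  ![(magB U 0 - Bs 0) / Real.sqrt 2,
    (magB U 1 - Bs 1) / Real.sqrt 2,
    (magB U 2 - Bs 2) / Real.sqrt 2,
    Real.sqrt (dens U) * (vel U 0 - vs 0) / Real.sqrt 2,
    Real.sqrt (dens U) * (vel U 1 - vs 1) / Real.sqrt 2,
    Real.sqrt (dens U) * (vel U 2 - vs 2) / Real.sqrt 2,
    Real.sqrt (2 * intE U) / Real.sqrt 2]

/-- `|θ|²`. -/
def thetaSq (U : MHDState) (vs Bs : Fin 3 → ℝ) : ℝ := ∑ k, theta U vs Bs k ^ 2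

/-- Godunov–Powell source vector `S(U) = (0, B, v, v·B)`. -/
def source (U : MHDState) : MHDState := mk 0 (magB U) (vel U) (dot3 (vel U) (magB U))

/-- HLL numerical flux with clamped wave speeds `σm ≤ 0 ≤ σp`. -/
def hllFlux (pfun : ℝ → ℝ → ℝ) {d : ℕ} (hd : d ≤ 3) (ξ : Fin d → ℝ)
    (Um Up : MHDState) (σm σp : ℝ) : MHDState :=
  (σp - σm)⁻¹ • (σp • dirFlux pfun hd ξ Um - σm • dirFlux pfun hd ξ Up
    + (σm * σp) • (Up - Um))

/-- HLL intermediate state `H(U⁻, U⁺; ξ)`. -/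
def hllMid (pfun : ℝ → ℝ → ℝ) {d : ℕ} (hd : d ≤ 3) (ξ : Fin d → ℝ)
    (Um Up : MHDState) (σm σp : ℝ) : MHDState :=
  (σp - σm)⁻¹ • (σp • Up - dirFlux pfun hd ξ Up - σm • Um + dirFlux pfun hd ξ Um)

/-- The quantity `α̂_j` of Theorem 2.3. -/
def alphaHat (pfun : ℝ → ℝ → ℝ) {d : ℕ} (hd : d ≤ 3) {N : ℕ}
    (s : Fin N → ℝ) (ξ : Fin N → Fin d → ℝ) (U : Fin N → MHDState) (j : Fin N) : ℝ :=
  max (dirDot hd (ξ j) (vel (U j)))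
      ((∑ i, s i)⁻¹ * ∑ i, s i * dirDot hd (fun k => ξ j k - ξ i k) (roeV (U j) (U i)))
  + waveC pfun hd (ξ j) (U j)
  + 2 * (∑ i, s i)⁻¹ * ∑ i, s i *
      (norm3 (magB (U j) - magB (U i)) / (Real.sqrt (dens (U j)) + Real.sqrt (dens (U i))))

def d1le3 : (1 : ℕ) ≤ 3 := by omega
def d2le3 : (2 : ℕ) ≤ 3 := by omega

/-- In one dimension the direction `ξ = 1`. -/
def xi1 : Fin 1 → ℝ := fun _ => 1

/-!
Testing a state against `n* = (|v*|²/2, −v*, −B*, 1)` turns the nonlinear condition `𝓔(U) > 0` into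
the positivity of all the affine functionals `R(U) = U · n* + |B*|²/2`, the energies of `U` relative
to `(v*, B*)`. Since the update is affine in the nodal states and the fluxes, it suffices to bound
the total flux of `R` out of the cell by `R` times the CFL speeds.

In a direction `ξ` the flux of `R` is the sum of `⟨ξ, B⟩ (v* · B*)`, which the divergence-free
identity cancels, of a fast-wave part, which Cauchy–Schwarz and the dispersion relation of `𝒞` bound
by `𝒞(U; ξ) R(U)`, and of a transport part that involves the arbitrary number `⟨ξ, v*⟩`. Over two
states, or over the edges of a closed polygon, `⟨ξ, v*⟩` occurs only through terms
`⟨ζ, v̄ − v*⟩ (|B − B*|² − |B̃ − B*|²)`, and the Roe weights in `v̄` make these at most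
`2 |ζ| (R + R̃)` times the magnetic jump `|B − B̃|/(√ρ + √ρ̃)`.

For two states this shows that the HLL middle state has nonnegative relative energy up to the
multiple `⟨ξ, B⁺ − B⁻⟩/(σ⁺ − σ⁻)` of `v* · B*`. The Godunov–Powell penalty removes exactly this
defect, at the price of the term `|⟨ξ, B⁺ − B⁻⟩| |(v − v*) · (B − B*)|`, which is at most
`ρ^{−1/2} |⟨ξ, B⁺ − B⁻⟩| R`.
-/

section InnerProductSpace

open scoped InnerProductSpace

variable {E : Type*} [NormedAddCommGroup E] [InnerProductSpace ℝ E]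

theorem inner_sub_smul_sub_smul_of_norm_eq_one {e : E} (he : ‖e‖ = 1) (x y : E) :
    ⟪x - ⟪e, x⟫_ℝ • e, y - ⟪e, y⟫_ℝ • e⟫_ℝ = ⟪x, y⟫_ℝ - ⟪e, x⟫_ℝ * ⟪e, y⟫_ℝ := by
  simp only [inner_sub_left, inner_sub_right, real_inner_smul_left, real_inner_smul_right,
    real_inner_self_eq_norm_sq, he, real_inner_comm e x]
  ring

theorem real_inner_sq_le_norm_sq_of_norm_eq_one {e : E} (he : ‖e‖ = 1) (x : E) :
    ⟪e, x⟫_ℝ ^ 2 ≤ ‖x‖ ^ 2 := by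
  simpa [he] using sq_le_sq.2 ((abs_real_inner_le_norm e x).trans (le_abs_self _))

theorem sq_inner_sub_le_of_norm_eq_one {e : E} (he : ‖e‖ = 1) (x y : E) :
    (⟪x, y⟫_ℝ - ⟪e, x⟫_ℝ * ⟪e, y⟫_ℝ) ^ 2 ≤
      (‖x‖ ^ 2 - ⟪e, x⟫_ℝ ^ 2) * (‖y‖ ^ 2 - ⟪e, y⟫_ℝ ^ 2) := by
  have h := real_inner_mul_inner_self_le (x - ⟪e, x⟫_ℝ • e) (y - ⟪e, y⟫_ℝ • e)
  simpa only [inner_sub_smul_sub_smul_of_norm_eq_one he, real_inner_self_eq_norm_sq, ← sq] using h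

theorem norm_sq_smul_sub_smul_le {e : E} (he : ‖e‖ = 1) {c l : ℝ} {b y : E} (hc : c ^ 2 ≤ l)
    (hb : ‖b‖ ^ 2 ≤ l)
    (hl : (l - c ^ 2) * (l - ‖b‖ ^ 2) = c ^ 2 * (‖b‖ ^ 2 - ⟪e, b⟫_ℝ ^ 2)) (z : ℝ) :
    ‖(c * z + ⟪y, b⟫_ℝ) • e - ⟪e, b⟫_ℝ • y‖ ^ 2 ≤ l * (z ^ 2 + ‖y‖ ^ 2) := by
  set t := ⟪y, b⟫_ℝ - ⟪e, y⟫_ℝ * ⟪e, b⟫_ℝ with ht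
  set Y := ‖y‖ ^ 2 - ⟪e, y⟫_ℝ ^ 2 with hY
  have hY_nonneg : 0 ≤ Y := sub_nonneg.2 (real_inner_sq_le_norm_sq_of_norm_eq_one he y)
  have ht_sq : t ^ 2 ≤ Y * (‖b‖ ^ 2 - ⟪e, b⟫_ℝ ^ 2) := sq_inner_sub_le_of_norm_eq_one he y b
  have hcross : 2 * (c * z * t) ≤ (l - c ^ 2) * z ^ 2 + (l - ‖b‖ ^ 2) * Y := by
    refine two_mul_le_add_of_sq_le_mul (mul_nonneg (sub_nonneg.2 hc) (sq_nonneg z))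
      (mul_nonneg (sub_nonneg.2 hb) hY_nonneg) ?_
    calc (c * z * t) ^ 2 = (c * z) ^ 2 * t ^ 2 := mul_pow _ _ _
      _ ≤ (c * z) ^ 2 * (Y * (‖b‖ ^ 2 - ⟪e, b⟫_ℝ ^ 2)) := by gcongr
      _ = (l - c ^ 2) * z ^ 2 * ((l - ‖b‖ ^ 2) * Y) := by linear_combination -(z ^ 2 * Y) * hl
  have hexpand : ‖(c * z + ⟪y, b⟫_ℝ) • e - ⟪e, b⟫_ℝ • y‖ ^ 2 =
      c ^ 2 * z ^ 2 + 2 * (c * z * t) + t ^ 2 + ⟪e, b⟫_ℝ ^ 2 * Y := by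
    rw [norm_sub_sq_real, norm_smul, norm_smul, real_inner_smul_left, real_inner_smul_right, he,
      mul_pow, mul_pow, Real.norm_eq_abs, Real.norm_eq_abs, sq_abs, sq_abs]
    simp only [ht, hY]
    ring
  have hproj : 0 ≤ l * ⟪e, y⟫_ℝ ^ 2 := mul_nonneg ((sq_nonneg c).trans hc) (sq_nonneg _)
  rw [hexpand]
  linarith

theorem inner_smul_sub_smul_le {e : E} (he : ‖e‖ = 1) {c C : ℝ} {b : E} (hC : 0 ≤ C)
    (hc : c ^ 2 ≤ C ^ 2) (hb : ‖b‖ ^ 2 ≤ C ^ 2)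
    (hroot : (C ^ 2 - c ^ 2) * (C ^ 2 - ‖b‖ ^ 2) = c ^ 2 * (‖b‖ ^ 2 - ⟪e, b⟫_ℝ ^ 2))
    (u y : E) (z : ℝ) :
    ⟪u, (c * z + ⟪y, b⟫_ℝ) • e - ⟪e, b⟫_ℝ • y⟫_ℝ ≤
      C * ((‖u‖ ^ 2 + ‖y‖ ^ 2 + z ^ 2) / 2) := by
  set g := (c * z + ⟪y, b⟫_ℝ) • e - ⟪e, b⟫_ℝ • y
  have hg : ‖g‖ ^ 2 ≤ C ^ 2 * (z ^ 2 + ‖y‖ ^ 2) := norm_sq_smul_sub_smul_le he hc hb hroot z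
  have hbound : 2 * ⟪u, g⟫_ℝ ≤ C * ‖u‖ ^ 2 + C * (z ^ 2 + ‖y‖ ^ 2) := by
    refine two_mul_le_add_of_sq_le_mul (by positivity) (by positivity) ?_
    calc ⟪u, g⟫_ℝ ^ 2 ≤ ‖u‖ ^ 2 * ‖g‖ ^ 2 := by
          simpa only [sq, real_inner_self_eq_norm_mul_norm, mul_pow] using
            real_inner_mul_inner_self_le u g
      _ ≤ ‖u‖ ^ 2 * (C ^ 2 * (z ^ 2 + ‖y‖ ^ 2)) := by gcongr
      _ = C * ‖u‖ ^ 2 * (C * (z ^ 2 + ‖y‖ ^ 2)) := by ring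
  linarith

theorem abs_inner_add_mul_norm_sq_sub_le (e u w x y : E) :
    |⟪e, u + w⟫_ℝ * (‖x‖ ^ 2 - ‖y‖ ^ 2)| ≤
      ‖e‖ * ‖x - y‖ * (‖u‖ ^ 2 + ‖x‖ ^ 2 + (‖w‖ ^ 2 + ‖y‖ ^ 2)) := by
  have hdiff : ‖x‖ ^ 2 - ‖y‖ ^ 2 = ⟪x - y, x + y⟫_ℝ := by
    simp only [inner_sub_left, inner_add_right, real_inner_self_eq_norm_sq, real_inner_comm x y]
    ring
  have hprod : ‖u + w‖ * ‖x + y‖ ≤ ‖u‖ ^ 2 + ‖x‖ ^ 2 + (‖w‖ ^ 2 + ‖y‖ ^ 2) := by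
    have hu := add_sq_le (a := ‖u‖) (b := ‖w‖)
    have hx := add_sq_le (a := ‖x‖) (b := ‖y‖)
    have hmul := two_mul_le_add_sq (‖u‖ + ‖w‖) (‖x‖ + ‖y‖)
    have htri : ‖u + w‖ * ‖x + y‖ ≤ (‖u‖ + ‖w‖) * (‖x‖ + ‖y‖) := by
      gcongr <;> exact norm_add_le _ _
    linarith
  calc |⟪e, u + w⟫_ℝ * (‖x‖ ^ 2 - ‖y‖ ^ 2)|
      = |⟪e, u + w⟫_ℝ| * |⟪x - y, x + y⟫_ℝ| := by rw [hdiff, abs_mul]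
    _ ≤ ‖e‖ * ‖u + w‖ * (‖x - y‖ * ‖x + y‖) := by
        gcongr <;> exact abs_real_inner_le_norm _ _
    _ = ‖e‖ * ‖x - y‖ * (‖u + w‖ * ‖x + y‖) := by ring
    _ ≤ ‖e‖ * ‖x - y‖ * (‖u‖ ^ 2 + ‖x‖ ^ 2 + (‖w‖ ^ 2 + ‖y‖ ^ 2)) := by gcongr

end InnerProductSpace

theorem mul_add_mul_le_max_mul_add {a b x y : ℝ} (hx : 0 ≤ x) (hy : 0 ≤ y) :
    a * x + b * y ≤ max a b * (x + y) := by
  rw [mul_add]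
  gcongr
  exacts [le_max_left a b, le_max_right a b]

theorem larger_root_bounds_and_factorization {c β b : ℝ} (hb : b ≤ β) {l : ℝ}
    (hl : l = (c ^ 2 + β + √((c ^ 2 + β) ^ 2 - 4 * c ^ 2 * b)) / 2) :
    c ^ 2 ≤ l ∧ β ≤ l ∧ (l - c ^ 2) * (l - β) = c ^ 2 * (β - b) := by
  have hdisc : (c ^ 2 - β) ^ 2 ≤ (c ^ 2 + β) ^ 2 - 4 * c ^ 2 * b := by
    linarith [mul_le_mul_of_nonneg_left hb (sq_nonneg c)]
  have habs := abs_le.1 (Real.abs_le_sqrt hdisc)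
  have hsq := Real.sq_sqrt ((sq_nonneg _).trans hdisc)
  subst hl
  exact ⟨by linarith, by linarith, by linear_combination hsq / 4⟩

theorem neg_sum_mul_antisymm_le {ι : Type*} [Fintype ι] {s T R : ι → ℝ} {g K : ι → ι → ℝ}
    (hs : ∀ i, 0 ≤ s i) (hg : ∀ i j, g i j = -g j i) (hK : ∀ i j, K i j = K j i)
    (h : ∀ i j, |g i j * (T i - T j)| ≤ K i j * (R i + R j)) :
    -∑ i, ∑ j, s i * s j * (g i j * T i) ≤ ∑ i, ∑ j, s i * s j * (K i j * R i) := by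
  have hpair : 0 ≤ ∑ i, ∑ j, s i * s j * (K i j * (R i + R j) + g i j * (T i - T j)) :=
    Finset.sum_nonneg fun i _ => Finset.sum_nonneg fun j _ =>
      mul_nonneg (mul_nonneg (hs i) (hs j)) (neg_le_iff_add_nonneg'.1 (abs_le.1 (h i j)).1)
  have hswap : ∑ i, ∑ j, s i * s j * (K i j * R j - g i j * T j) =
      ∑ i, ∑ j, s i * s j * (K i j * R i + g i j * T i) := by
    rw [Finset.sum_comm]
    refine Finset.sum_congr rfl fun j _ => Finset.sum_congr rfl fun i _ => ?_
    rw [hK i j, hg i j]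
    ring
  have hsplit : ∑ i, ∑ j, s i * s j * (K i j * (R i + R j) + g i j * (T i - T j)) =
      ∑ i, ∑ j, s i * s j * (K i j * R i + g i j * T i) +
        ∑ i, ∑ j, s i * s j * (K i j * R j - g i j * T j) := by
    simp only [← Finset.sum_add_distrib]
    exact Finset.sum_congr rfl fun i _ => Finset.sum_congr rfl fun j _ => by ring
  rw [hsplit, hswap] at hpair
  simp only [mul_add, Finset.sum_add_distrib] at hpair
  linarith

theorem affine_update_pos {E ι κ : Type*} [AddCommGroup E] [Module ℝ E] [Fintype ι] [Fintype κ]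
    [Nonempty κ] (L : E →ₗ[ℝ] ℝ) (c : ℝ) {w : ι → ℝ} {b : κ → ℝ} (hw : ∀ i, 0 ≤ w i)
    (hsum : ∑ i, w i + ∑ k, b k = 1) {u : ι → E} (hu : ∀ i, 0 ≤ L (u i) + c)
    {x : κ → E} (hx : ∀ k, 0 < L (x k) + c) {τ : ℝ} (hτ : 0 ≤ τ) {s α : κ → ℝ}
    (hcfl : ∀ k, τ * s k * α k < b k) {f : κ → E}
    (hf : ∑ k, s k * L (f k) ≤ ∑ k, s k * (α k * (L (x k) + c))) :
    0 < L (∑ i, w i • u i + ∑ k, b k • x k - τ • ∑ k, s k • f k) + c := by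
  have hupdate : L (∑ i, w i • u i + ∑ k, b k • x k - τ • ∑ k, s k • f k) + c =
      ∑ i, w i * (L (u i) + c) + ∑ k, b k * (L (x k) + c) - τ * ∑ k, s k * L (f k) := by
    simp only [map_sub, map_add, map_sum, map_smul, smul_eq_mul, mul_add, Finset.sum_add_distrib,
      ← Finset.sum_mul]
    linear_combination (-c) * hsum
  have hinterior : 0 ≤ ∑ i, w i * (L (u i) + c) :=
    Finset.sum_nonneg fun i _ => mul_nonneg (hw i) (hu i)
  have hboundary : τ * ∑ k, s k * (α k * (L (x k) + c)) < ∑ k, b k * (L (x k) + c) := by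
    rw [Finset.mul_sum]
    refine Finset.sum_lt_sum_of_nonempty Finset.univ_nonempty fun k _ => ?_
    simpa only [mul_assoc] using mul_lt_mul_of_pos_right (hcfl k) (hx k)
  linarith [mul_le_mul_of_nonneg_left hf hτ]

section Euclidean

open scoped InnerProductSpace
open WithLp (toLp)

theorem dot3_eq_inner (a b : Fin 3 → ℝ) : dot3 a b = ⟪toLp 2 a, toLp 2 b⟫_ℝ := by
  simp only [dot3, PiLp.inner_apply, RCLike.inner_apply, conj_trivial, mul_comm]

theorem sq3_eq_norm_sq (a : Fin 3 → ℝ) : sq3 a = ‖toLp 2 a‖ ^ 2 := by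
  rw [sq3, dot3_eq_inner, real_inner_self_eq_norm_sq]

theorem norm3_eq_norm (a : Fin 3 → ℝ) : norm3 a = ‖toLp 2 a‖ := by
  rw [norm3, sq3_eq_norm_sq, Real.sqrt_sq (norm_nonneg _)]

theorem sq3_nonneg (a : Fin 3 → ℝ) : 0 ≤ sq3 a := by
  rw [sq3_eq_norm_sq]
  positivity

variable {d : ℕ}

/-- The direction `ξ ∈ ℝ^d` as a vector of Euclidean `ℝ³`, padded with zeros. -/
def extDir (ξ : Fin d → ℝ) : EuclideanSpace ℝ (Fin 3) :=
  toLp 2 fun k => if h : (k : ℕ) < d then ξ ⟨k, h⟩ else 0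

theorem norm_extDir (hd : d ≤ 3) {ξ : Fin d → ℝ} (hξ : unitVec ξ) : ‖extDir ξ‖ = 1 := by
  have hsq : ‖extDir ξ‖ ^ 2 = 1 := by
    rw [← hξ, extDir, ← sq3_eq_norm_sq]
    interval_cases d <;> simp [sq3, dot3, Fin.sum_univ_succ, sq]
  exact (pow_eq_one_iff_of_nonneg (norm_nonneg _) two_ne_zero).1 hsq

theorem norm_extDir_sub_le (hd : d ≤ 3) {ξ ζ : Fin d → ℝ} (hξ : unitVec ξ) (hζ : unitVec ζ) :
    ‖extDir (ξ - ζ)‖ ≤ 2 := by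
  have hsub : extDir (ξ - ζ) = extDir ξ - extDir ζ := by
    ext k
    by_cases h : (k : ℕ) < d <;> simp [extDir, h]
  calc ‖extDir (ξ - ζ)‖ ≤ ‖extDir ξ‖ + ‖extDir ζ‖ := hsub ▸ norm_sub_le _ _
    _ = 2 := by rw [norm_extDir hd hξ, norm_extDir hd hζ, one_add_one_eq_two]

variable (hd : d ≤ 3)

theorem dirDot_eq_inner (ξ : Fin d → ℝ) (w : Fin 3 → ℝ) :
    dirDot hd ξ w = ⟪extDir ξ, toLp 2 w⟫_ℝ := by
  rw [extDir, ← dot3_eq_inner]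
  interval_cases d <;> simp [dirDot, dot3, Fin.sum_univ_succ]

theorem dirDot_sub (ξ : Fin d → ℝ) (a b : Fin 3 → ℝ) :
    dirDot hd ξ (a - b) = dirDot hd ξ a - dirDot hd ξ b := by
  simp only [dirDot_eq_inner, WithLp.toLp_sub, inner_sub_right]

theorem dirDot_sub_left (ξ ζ : Fin d → ℝ) (a : Fin 3 → ℝ) :
    dirDot hd (ξ - ζ) a = dirDot hd ξ a - dirDot hd ζ a := by
  simp only [dirDot, Pi.sub_apply, sub_mul, Finset.sum_sub_distrib]

theorem dirDot_neg_left (ξ : Fin d → ℝ) (a : Fin 3 → ℝ) : dirDot hd (-ξ) a = -dirDot hd ξ a := by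
  simp only [dirDot, Pi.neg_apply, neg_mul, Finset.sum_neg_distrib]

theorem sum_mul_dirDot_eq_zero {ι : Type*} [Fintype ι] {s : ι → ℝ} {ξ : ι → Fin d → ℝ}
    (h : ∑ j, s j • ξ j = 0) (w : Fin 3 → ℝ) : ∑ j, s j * dirDot hd (ξ j) w = 0 := by
  calc ∑ j, s j * dirDot hd (ξ j) w = dirDot hd (∑ j, s j • ξ j) w := by
        simp only [dirDot, Finset.sum_apply, Pi.smul_apply, smul_eq_mul, Finset.mul_sum,
          Finset.sum_mul, mul_assoc]
        exact Finset.sum_comm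
    _ = 0 := by
        rw [h]
        simp only [dirDot, Pi.zero_apply, zero_mul, Finset.sum_const_zero]

theorem dirDot_eq_weighted_mean_sub {ι : Type*} [Fintype ι] {s : ι → ℝ} (hs : ∑ i, s i ≠ 0)
    {ξ : ι → Fin d → ℝ} (h : ∑ i, s i • ξ i = 0) (j : ι) (w : Fin 3 → ℝ) :
    dirDot hd (ξ j) w = (∑ i, s i)⁻¹ * ∑ i, s i * dirDot hd (ξ j - ξ i) w := by
  simp only [dirDot_sub_left, mul_sub, Finset.sum_sub_distrib, sum_mul_dirDot_eq_zero hd h,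
    ← Finset.sum_mul, sub_zero, inv_mul_cancel_left₀ hs]

end Euclidean

theorem dot8_eq_linearCombination (U W : MHDState) :
    dot8 U W = Fintype.linearCombination ℝ W U := rfl

/-- The energy of `U` relative to the reference velocity `v*` and magnetic field `B*`, in the form
of the affine functional of `U` whose positivity characterizes `𝒢`. -/
def relEnergy (U : MHDState) (vs Bs : Fin 3 → ℝ) : ℝ := dot8 U (nstar vs Bs) + sq3 Bs / 2

/-- The magnetic part `|B − B*|²/2` of the relative energy. -/
def relMagEnergy (U : MHDState) (Bs : Fin 3 → ℝ) : ℝ := sq3 (magB U - Bs) / 2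

theorem relEnergy_eq {U : MHDState} (hU : dens U ≠ 0) (vs Bs : Fin 3 → ℝ) :
    relEnergy U vs Bs = dens U * sq3 (vel U - vs) / 2 + relMagEnergy U Bs + intE U := by
  simp only [dens] at hU
  simp only [relEnergy, relMagEnergy, dot8, nstar, mk, sq3, dot3, vel, mom, magB, intE, toten, dens,
    Fin.sum_univ_three, Fin.sum_univ_eight, Pi.sub_apply, Matrix.cons_val]
  field_simp
  ring

theorem relMagEnergy_nonneg (U : MHDState) (Bs : Fin 3 → ℝ) : 0 ≤ relMagEnergy U Bs :=
  div_nonneg (sq3_nonneg _) zero_le_two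

theorem kinetic_add_magnetic_le_relEnergy {U : MHDState} (hU : U ∈ Gset) (vs Bs : Fin 3 → ℝ) :
    dens U * sq3 (vel U - vs) / 2 + relMagEnergy U Bs ≤ relEnergy U vs Bs := by
  rw [relEnergy_eq hU.1.ne']
  exact le_add_of_nonneg_right hU.2.le

theorem relMagEnergy_le_relEnergy {U : MHDState} (hU : U ∈ Gset) (vs Bs : Fin 3 → ℝ) :
    relMagEnergy U Bs ≤ relEnergy U vs Bs := by
  have hkin : 0 ≤ dens U * sq3 (vel U - vs) := mul_nonneg hU.1.le (sq3_nonneg _)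
  linarith [kinetic_add_magnetic_le_relEnergy hU vs Bs]

theorem relEnergy_pos {U : MHDState} (hU : U ∈ Gset) (vs Bs : Fin 3 → ℝ) :
    0 < relEnergy U vs Bs := by
  have hkin : 0 ≤ dens U * sq3 (vel U - vs) := mul_nonneg hU.1.le (sq3_nonneg _)
  rw [relEnergy_eq hU.1.ne']
  linarith [relMagEnergy_nonneg U Bs, hU.2]

theorem Gset_eq_GstarSet : Gset = GstarSet := by
  ext U
  refine ⟨fun hU => ⟨hU.1, relEnergy_pos hU⟩, fun hU => ⟨hU.1, ?_⟩⟩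
  have hmin : 0 < relEnergy U (vel U) (magB U) := hU.2 _ _
  simpa [relEnergy_eq hU.1.ne', relMagEnergy, sq3, dot3] using hmin

theorem abs_dot3_sub_le_relEnergy {U : MHDState} (hU : U ∈ Gset) (vs Bs : Fin 3 → ℝ) :
    |dot3 (vel U - vs) (magB U - Bs)| ≤ (√(dens U))⁻¹ * relEnergy U vs Bs := by
  have hρ : 0 < √(dens U) := Real.sqrt_pos.2 hU.1
  have henergy := kinetic_add_magnetic_le_relEnergy hU vs Bs
  rw [relMagEnergy, sq3_eq_norm_sq, sq3_eq_norm_sq] at henergy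
  rw [inv_mul_eq_div, le_div_iff₀ hρ, dot3_eq_inner]
  set x := WithLp.toLp 2 (vel U - vs)
  set y := WithLp.toLp 2 (magB U - Bs)
  calc |inner ℝ x y| * √(dens U) ≤ ‖x‖ * ‖y‖ * √(dens U) := by
        gcongr
        exact abs_real_inner_le_norm x y
    _ ≤ ((√(dens U) * ‖x‖) ^ 2 + ‖y‖ ^ 2) / 2 := by
        linarith [two_mul_le_add_sq (√(dens U) * ‖x‖) ‖y‖]
    _ ≤ relEnergy U vs Bs := by
        rw [mul_pow, Real.sq_sqrt hU.1.le]
        linarith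

section Flux

variable (pfun : ℝ → ℝ → ℝ) {d : ℕ} (hd : d ≤ 3)

/-- The flux `⟨ξ, F(U)⟩ · n*` of relative energy in direction `ξ`, corrected by the multiple of
`⟨ξ, B⟩` that the divergence-free condition cancels. -/
def relFlux (ξ : Fin d → ℝ) (U : MHDState) (vs Bs : Fin 3 → ℝ) : ℝ :=
  dot8 (dirFlux pfun hd ξ U) (nstar vs Bs) - dirDot hd ξ (magB U) * dot3 vs Bs

theorem dot8_source_nstar (U : MHDState) (vs Bs : Fin 3 → ℝ) :
    dot8 (source U) (nstar vs Bs) = dot3 (vel U - vs) (magB U - Bs) - dot3 vs Bs := by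
  simp only [dot8, source, nstar, mk, dot3, Fin.sum_univ_three, Fin.sum_univ_eight, Pi.sub_apply,
    Matrix.cons_val]
  ring

theorem dot8_flux_nstar {U : MHDState} (hU : dens U ≠ 0) (vs Bs : Fin 3 → ℝ) (i : Fin 3) :
    dot8 (flux pfun i U) (nstar vs Bs) =
      vel U i * (relEnergy U vs Bs - sq3 Bs / 2) + ptot pfun U * (vel U i - vs i)
        - magB U i * (dot3 (vel U - vs) (magB U - Bs) - dot3 vs Bs) := by
  rw [relEnergy, add_sub_cancel_right]
  simp only [dens] at hU
  generalize hP : ptot pfun U = P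
  fin_cases i <;>
  · simp only [dot8, flux, hP, nstar, mk, dot3, vel, mom, magB, toten, dens, Fin.sum_univ_three,
      Fin.sum_univ_eight, Pi.sub_apply, Matrix.cons_val, Fin.zero_eta, Fin.mk_one, Fin.reduceFinMk,
      Fin.reduceEq, if_true, if_false]
    field_simp
    ring

theorem dens_dirFlux (ξ : Fin d → ℝ) (U : MHDState) :
    dens (dirFlux pfun hd ξ U) = dens U * dirDot hd ξ (vel U) := by
  simp only [dens, dirFlux, Finset.sum_apply, Pi.smul_apply, smul_eq_mul, dirDot, Finset.mul_sum,
    flux, mk, Matrix.cons_val_zero]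
  exact Finset.sum_congr rfl fun k _ => mul_left_comm _ _ _

theorem relFlux_eq (ξ : Fin d → ℝ) {U : MHDState} (hU : dens U ≠ 0) (vs Bs : Fin 3 → ℝ) :
    relFlux pfun hd ξ U vs Bs =
      dirDot hd ξ (vel U) * (relEnergy U vs Bs - sq3 Bs / 2)
        + ptot pfun U * dirDot hd ξ (vel U - vs)
        - dirDot hd ξ (magB U) * dot3 (vel U - vs) (magB U - Bs) := by
  have hdot : dot8 (dirFlux pfun hd ξ U) (nstar vs Bs) =
      dirDot hd ξ (vel U) * (relEnergy U vs Bs - sq3 Bs / 2)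
        + ptot pfun U * dirDot hd ξ (vel U - vs)
        - dirDot hd ξ (magB U) * (dot3 (vel U - vs) (magB U - Bs) - dot3 vs Bs) := by
    rw [dot8_eq_linearCombination, dirFlux, map_sum]
    simp only [map_smul, ← dot8_eq_linearCombination, dot8_flux_nstar pfun hU, dirDot, smul_eq_mul,
      Finset.sum_mul, Finset.mul_sum, ← Finset.sum_add_distrib, ← Finset.sum_sub_distrib]
    exact Finset.sum_congr rfl fun k _ => by simp only [Pi.sub_apply]; ring
  rw [relFlux, hdot]
  ring

theorem relFlux_neg (ξ : Fin d → ℝ) (U : MHDState) (vs Bs : Fin 3 → ℝ) :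
    relFlux pfun hd (-ξ) U vs Bs = -relFlux pfun hd ξ U vs Bs := by
  simp only [relFlux, dirFlux, Pi.neg_apply, neg_smul, Finset.sum_neg_distrib, dirDot_neg_left,
    dot8_eq_linearCombination, map_neg]
  ring

theorem waveC_neg (ξ : Fin d → ℝ) (U : MHDState) :
    waveC pfun hd (-ξ) U = waveC pfun hd ξ U := by
  simp only [waveC, dirDot_neg_left, neg_sq]

theorem waveC_pos {pfun : ℝ → ℝ → ℝ} (hEOS : IsEOS pfun) (ξ : Fin d → ℝ) {U : MHDState}
    (hU : U ∈ Gset) : 0 < waveC pfun hd ξ U := by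
  have hspecE : 0 < specE U := div_pos hU.2 hU.1
  have hpres : 0 < pres pfun U := (hEOS _ _ hU.1).1 hspecE
  have hsound : 0 < soundC pfun U :=
    div_pos hpres (mul_pos hU.1 (Real.sqrt_pos.2 (mul_pos two_pos hspecE)))
  have halfven : 0 ≤ sq3 (magB U) / dens U := div_nonneg (sq3_nonneg _) hU.1.le
  unfold waveC
  positivity

theorem waveC_sq_bounds_and_dispersion {ξ : Fin d → ℝ} (hξ : unitVec ξ) {U : MHDState}
    (hU : 0 < dens U) :
    soundC pfun U ^ 2 ≤ waveC pfun hd ξ U ^ 2 ∧ sq3 (magB U) / dens U ≤ waveC pfun hd ξ U ^ 2 ∧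
      (waveC pfun hd ξ U ^ 2 - soundC pfun U ^ 2) *
          (waveC pfun hd ξ U ^ 2 - sq3 (magB U) / dens U) =
        soundC pfun U ^ 2 * (sq3 (magB U) / dens U - dirDot hd ξ (magB U) ^ 2 / dens U) := by
  have halfven : 0 ≤ sq3 (magB U) / dens U := div_nonneg (sq3_nonneg _) hU.le
  refine larger_root_bounds_and_factorization ?_ ?_
  · rw [sq3_eq_norm_sq, dirDot_eq_inner]
    exact div_le_div_of_nonneg_right
      (real_inner_sq_le_norm_sq_of_norm_eq_one (norm_extDir hd hξ) _) hU.le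
  · rw [waveC, Real.sq_sqrt (by positivity), mul_div_assoc]

theorem pres_eq_soundC_mul {U : MHDState} (hU : U ∈ Gset) :
    pres pfun U = soundC pfun U * (√(dens U) * √(2 * intE U)) := by
  have hρ : 0 < dens U := hU.1
  have hspecE : 0 < √(2 * specE U) := Real.sqrt_pos.2 (mul_pos two_pos (div_pos hU.2 hU.1))
  have hintE : 2 * intE U = dens U * (2 * specE U) := by
    rw [specE]
    field_simp
  have hsqrt : √(dens U) * √(2 * intE U) = dens U * √(2 * specE U) := by
    rw [hintE, Real.sqrt_mul hρ.le, ← mul_assoc, Real.mul_self_sqrt hρ.le]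
  rw [hsqrt, soundC, div_mul_cancel₀ _ (mul_pos hρ hspecE).ne']

theorem pres_mul_add_sub_le_waveC_mul_relEnergy {ξ : Fin d → ℝ} (hξ : unitVec ξ)
    {U : MHDState} (hU : U ∈ Gset) (vs Bs : Fin 3 → ℝ) :
    pres pfun U * dirDot hd ξ (vel U - vs)
        + dirDot hd ξ (vel U - vs) * dot3 (magB U - Bs) (magB U)
        - dirDot hd ξ (magB U) * dot3 (vel U - vs) (magB U - Bs)
      ≤ waveC pfun hd ξ U * relEnergy U vs Bs := by
  have hρ : 0 < √(dens U) := Real.sqrt_pos.2 hU.1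
  obtain ⟨hsound, halfven, hroot⟩ := waveC_sq_bounds_and_dispersion pfun hd hξ hU.1
  have hB : ‖(√(dens U))⁻¹ • WithLp.toLp 2 (magB U)‖ ^ 2 = sq3 (magB U) / dens U := by
    rw [norm_smul, mul_pow, norm_inv, inv_pow, Real.norm_eq_abs, sq_abs, Real.sq_sqrt hU.1.le,
      sq3_eq_norm_sq, inv_mul_eq_div]
  have hξB : inner ℝ (extDir ξ) ((√(dens U))⁻¹ • WithLp.toLp 2 (magB U)) ^ 2 =
      dirDot hd ξ (magB U) ^ 2 / dens U := by
    rw [real_inner_smul_right, mul_pow, inv_pow, Real.sq_sqrt hU.1.le, dirDot_eq_inner,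
      inv_mul_eq_div]
  rw [← hB] at halfven
  rw [← hB, ← hξB] at hroot
  have hform := inner_smul_sub_smul_le (C := waveC pfun hd ξ U) (norm_extDir hd hξ)
    (Real.sqrt_nonneg _) hsound halfven hroot (√(dens U) • WithLp.toLp 2 (vel U - vs))
    (WithLp.toLp 2 (magB U - Bs)) (√(2 * intE U))
  rw [norm_smul, mul_pow, Real.norm_eq_abs, sq_abs, Real.sq_sqrt hU.1.le,
    Real.sq_sqrt (mul_nonneg zero_le_two hU.2.le), ← sq3_eq_norm_sq, ← sq3_eq_norm_sq] at hform
  simp only [inner_sub_right, real_inner_smul_left, real_inner_smul_right,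
    real_inner_comm (extDir ξ)] at hform
  rw [pres_eq_soundC_mul pfun hU, relEnergy_eq hU.1.ne', relMagEnergy, dirDot_eq_inner,
    dirDot_eq_inner, dot3_eq_inner, dot3_eq_inner]
  refine (le_of_eq ?_).trans (hform.trans (le_of_eq ?_))
  · field_simp
  · ring

theorem relFlux_le {ξ : Fin d → ℝ} (hξ : unitVec ξ) {U : MHDState} (hU : U ∈ Gset)
    (vs Bs : Fin 3 → ℝ) :
    relFlux pfun hd ξ U vs Bs ≤
      dirDot hd ξ (vel U) * (relEnergy U vs Bs - relMagEnergy U Bs)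
        + dirDot hd ξ vs * (relMagEnergy U Bs - sq3 Bs / 2)
        + waveC pfun hd ξ U * relEnergy U vs Bs := by
  have hB : sq3 (magB U) / 2 =
      dot3 (magB U - Bs) (magB U) - relMagEnergy U Bs + sq3 Bs / 2 := by
    simp only [relMagEnergy, sq3, dot3, Fin.sum_univ_three, Pi.sub_apply]
    ring
  have hwave := pres_mul_add_sub_le_waveC_mul_relEnergy pfun hd hξ hU vs Bs
  rw [relFlux_eq pfun hd ξ hU.1.ne', ptot, hB]
  rw [dirDot_sub] at hwave ⊢
  linarith

end Flux

section Jump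

/-- The jump `|B − B̃|/(√ρ + √ρ̃)` of the magnetic field between two states, in the units of a
speed. -/
def magJump (U V : MHDState) : ℝ := norm3 (magB U - magB V) / (√(dens U) + √(dens V))

theorem magJump_nonneg (U V : MHDState) : 0 ≤ magJump U V :=
  div_nonneg (Real.sqrt_nonneg _) (by positivity)

theorem magJump_comm (U V : MHDState) : magJump U V = magJump V U := by
  simp only [magJump, norm3_eq_norm, WithLp.toLp_sub, norm_sub_rev, add_comm]

theorem roeV_comm (U V : MHDState) : roeV U V = roeV V U := by
  funext k
  simp only [roeV, add_comm]

theorem roeV_sub_eq {U V : MHDState} (hU : 0 < dens U) (hV : 0 < dens V) (vs : Fin 3 → ℝ) :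
    roeV U V - vs = (√(dens U) + √(dens V))⁻¹ •
      (√(dens U) • (vel U - vs) + √(dens V) • (vel V - vs)) := by
  have hne : √(dens U) + √(dens V) ≠ 0 := (add_pos (Real.sqrt_pos.2 hU) (Real.sqrt_pos.2 hV)).ne'
  funext k
  simp only [roeV, Pi.sub_apply, Pi.add_apply, Pi.smul_apply, smul_eq_mul]
  field_simp
  ring

theorem abs_dirDot_roeV_sub_mul_le {d : ℕ} (hd : d ≤ 3) (ξ : Fin d → ℝ) {U V : MHDState}
    (hU : U ∈ Gset) (hV : V ∈ Gset) (vs Bs : Fin 3 → ℝ) :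
    |dirDot hd ξ (roeV U V - vs) * (relMagEnergy U Bs - relMagEnergy V Bs)| ≤
      ‖extDir ξ‖ * magJump U V * (relEnergy U vs Bs + relEnergy V vs Bs) := by
  have hρ : 0 < √(dens U) + √(dens V) := add_pos (Real.sqrt_pos.2 hU.1) (Real.sqrt_pos.2 hV.1)
  have hbound := abs_inner_add_mul_norm_sq_sub_le (extDir ξ)
    (√(dens U) • WithLp.toLp 2 (vel U - vs)) (√(dens V) • WithLp.toLp 2 (vel V - vs))
    (WithLp.toLp 2 (magB U - Bs)) (WithLp.toLp 2 (magB V - Bs))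
  rw [← WithLp.toLp_sub, sub_sub_sub_cancel_right, norm_smul, norm_smul, mul_pow, mul_pow,
    Real.norm_eq_abs, Real.norm_eq_abs, sq_abs, sq_abs, Real.sq_sqrt hU.1.le,
    Real.sq_sqrt hV.1.le] at hbound
  simp only [← sq3_eq_norm_sq] at hbound
  rw [← norm3_eq_norm (magB U - magB V)] at hbound
  have hU_energy := kinetic_add_magnetic_le_relEnergy hU vs Bs
  have hV_energy := kinetic_add_magnetic_le_relEnergy hV vs Bs
  rw [relMagEnergy] at hU_energy hV_energy
  rw [roeV_sub_eq hU.1 hV.1, dirDot_eq_inner, WithLp.toLp_smul, real_inner_smul_right,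
    WithLp.toLp_add, WithLp.toLp_smul, WithLp.toLp_smul, relMagEnergy, relMagEnergy, ← sub_div,
    mul_div_assoc', mul_assoc, abs_div, abs_mul, abs_inv, abs_of_pos hρ, abs_two, magJump]
  have hcoef : 0 ≤ ‖extDir ξ‖ * norm3 (magB U - magB V) :=
    mul_nonneg (norm_nonneg _) (Real.sqrt_nonneg _)
  calc _ ≤ (√(dens U) + √(dens V))⁻¹ * (‖extDir ξ‖ * norm3 (magB U - magB V) *
        (2 * (relEnergy U vs Bs + relEnergy V vs Bs))) / 2 := by
        gcongr
        exact hbound.trans (mul_le_mul_of_nonneg_left (by linarith) hcoef)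
    _ = _ := by ring

end Jump

section Bounds

variable (pfun : ℝ → ℝ → ℝ) {d : ℕ} (hd : d ≤ 3)

theorem relFlux_sub_relFlux_le {ξ : Fin d → ℝ} (hξ : unitVec ξ) {Um Up : MHDState}
    (hm : Um ∈ Gset) (hp : Up ∈ Gset) (vs Bs : Fin 3 → ℝ) :
    relFlux pfun hd ξ Up vs Bs - relFlux pfun hd ξ Um vs Bs ≤
      alphaR pfun hd ξ Up Um * relEnergy Up vs Bs
        - alphaL pfun hd ξ Um Up * relEnergy Um vs Bs := by
  have hξ_neg : unitVec (-ξ) := by simpa only [unitVec, Pi.neg_apply, neg_sq] using hξ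
  have hplus := relFlux_le pfun hd hξ hp vs Bs
  have hminus := relFlux_le pfun hd hξ_neg hm vs Bs
  rw [relFlux_neg, waveC_neg, dirDot_neg_left, dirDot_neg_left] at hminus
  have hroe := abs_dirDot_roeV_sub_mul_le hd ξ hp hm vs Bs
  rw [norm_extDir hd hξ, one_mul, dirDot_sub, abs_le] at hroe
  have hmaxR := mul_add_mul_le_max_mul_add (a := dirDot hd ξ (vel Up))
    (b := dirDot hd ξ (roeV Up Um)) (sub_nonneg.2 (relMagEnergy_le_relEnergy hp vs Bs))
    (relMagEnergy_nonneg Up Bs)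
  have hmaxL := mul_add_mul_le_max_mul_add (a := -dirDot hd ξ (vel Um))
    (b := -dirDot hd ξ (roeV Um Up)) (sub_nonneg.2 (relMagEnergy_le_relEnergy hm vs Bs))
    (relMagEnergy_nonneg Um Bs)
  rw [max_neg_neg, sub_add_cancel, roeV_comm Um Up] at hmaxL
  rw [sub_add_cancel] at hmaxR
  rw [alphaR, alphaL, ← magJump, ← magJump, magJump_comm Um Up, roeV_comm Um Up]
  linarith

section Polytope

variable {N : ℕ} {s : Fin N → ℝ} {ξ : Fin N → Fin d → ℝ} {U : Fin N → MHDState}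

theorem relFlux_le_alphaHat_mul_sub (hS : ∑ i, s i ≠ 0) (hs : ∑ i, s i • ξ i = 0) {j : Fin N}
    (hξ : unitVec (ξ j)) (hU : U j ∈ Gset) (vs Bs : Fin 3 → ℝ) :
    relFlux pfun hd (ξ j) (U j) vs Bs ≤
      alphaHat pfun hd s ξ U j * relEnergy (U j) vs Bs - dirDot hd (ξ j) vs * (sq3 Bs / 2)
        - (∑ i, s i)⁻¹ * ∑ i, s i * (2 * magJump (U j) (U i) * relEnergy (U j) vs Bs
          + dirDot hd (ξ j - ξ i) (roeV (U j) (U i) - vs) * relMagEnergy (U j) Bs) := by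
  let A := (∑ i, s i)⁻¹ * ∑ i, s i * dirDot hd (ξ j - ξ i) (roeV (U j) (U i))
  have hα : alphaHat pfun hd s ξ U j = max (dirDot hd (ξ j) (vel (U j))) A
      + waveC pfun hd (ξ j) (U j) + 2 * (∑ i, s i)⁻¹ * ∑ i, s i * magJump (U j) (U i) := rfl
  have hmean : (∑ i, s i)⁻¹ * ∑ i, s i * (2 * magJump (U j) (U i) * relEnergy (U j) vs Bs
          + dirDot hd (ξ j - ξ i) (roeV (U j) (U i) - vs) * relMagEnergy (U j) Bs) =
      2 * (∑ i, s i)⁻¹ * (∑ i, s i * magJump (U j) (U i)) * relEnergy (U j) vs Bs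
        + (A - dirDot hd (ξ j) vs) * relMagEnergy (U j) Bs := by
    have hsum : ∑ i, s i * (2 * magJump (U j) (U i) * relEnergy (U j) vs Bs
          + dirDot hd (ξ j - ξ i) (roeV (U j) (U i) - vs) * relMagEnergy (U j) Bs) =
        2 * (∑ i, s i * magJump (U j) (U i)) * relEnergy (U j) vs Bs
          + (∑ i, s i * dirDot hd (ξ j - ξ i) (roeV (U j) (U i))
            - ∑ i, s i * dirDot hd (ξ j - ξ i) vs) * relMagEnergy (U j) Bs := by
      simp only [Finset.mul_sum, Finset.sum_mul, ← Finset.sum_sub_distrib,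
        ← Finset.sum_add_distrib]
      exact Finset.sum_congr rfl fun i _ => by rw [dirDot_sub]; ring
    rw [hsum, dirDot_eq_weighted_mean_sub hd hS hs j vs]
    ring
  have hmax := mul_add_mul_le_max_mul_add (a := dirDot hd (ξ j) (vel (U j))) (b := A)
    (sub_nonneg.2 (relMagEnergy_le_relEnergy hU vs Bs)) (relMagEnergy_nonneg (U j) Bs)
  rw [sub_add_cancel] at hmax
  rw [hmean, hα]
  linarith [relFlux_le pfun hd hξ hU vs Bs]

theorem sum_relFlux_le (hs_nonneg : ∀ j, 0 ≤ s j) (hS : ∑ i, s i ≠ 0) (hs : ∑ i, s i • ξ i = 0)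
    (hξ : ∀ j, unitVec (ξ j)) (hU : ∀ j, U j ∈ Gset) (vs Bs : Fin 3 → ℝ) :
    ∑ j, s j * relFlux pfun hd (ξ j) (U j) vs Bs ≤
      ∑ j, s j * (alphaHat pfun hd s ξ U j * relEnergy (U j) vs Bs) := by
  set D : Fin N → Fin N → ℝ := fun j i => 2 * magJump (U j) (U i) * relEnergy (U j) vs Bs
    + dirDot hd (ξ j - ξ i) (roeV (U j) (U i) - vs) * relMagEnergy (U j) Bs
  have hD : 0 ≤ ∑ j, ∑ i, s j * s i * D j i := by
    have h := neg_sum_mul_antisymm_le (T := fun j => relMagEnergy (U j) Bs)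
      (R := fun j => relEnergy (U j) vs Bs)
      (g := fun j i => dirDot hd (ξ j - ξ i) (roeV (U j) (U i) - vs))
      (K := fun j i => 2 * magJump (U j) (U i)) hs_nonneg
      (fun j i => by rw [← neg_sub (ξ i), dirDot_neg_left, roeV_comm])
      (fun j i => by rw [magJump_comm])
      (fun j i => (abs_dirDot_roeV_sub_mul_le hd _ (hU j) (hU i) vs Bs).trans
        (mul_le_mul_of_nonneg_right
          (mul_le_mul_of_nonneg_right (norm_extDir_sub_le hd (hξ j) (hξ i)) (magJump_nonneg _ _))
          (add_pos (relEnergy_pos (hU j) vs Bs) (relEnergy_pos (hU i) vs Bs)).le))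
    simp only [D, mul_add, Finset.sum_add_distrib]
    linarith
  calc ∑ j, s j * relFlux pfun hd (ξ j) (U j) vs Bs
      ≤ ∑ j, s j * (alphaHat pfun hd s ξ U j * relEnergy (U j) vs Bs
          - dirDot hd (ξ j) vs * (sq3 Bs / 2) - (∑ i, s i)⁻¹ * ∑ i, s i * D j i) :=
        Finset.sum_le_sum fun j _ => mul_le_mul_of_nonneg_left
          (relFlux_le_alphaHat_mul_sub pfun hd hS hs (hξ j) (hU j) vs Bs) (hs_nonneg j)
    _ = ∑ j, s j * (alphaHat pfun hd s ξ U j * relEnergy (U j) vs Bs)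
          - (∑ j, s j * dirDot hd (ξ j) vs) * (sq3 Bs / 2)
          - (∑ i, s i)⁻¹ * ∑ j, ∑ i, s j * s i * D j i := by
        simp only [mul_sub, Finset.sum_sub_distrib, Finset.sum_mul, Finset.mul_sum, mul_assoc,
          mul_left_comm (s _) (∑ i, s i)⁻¹]
    _ ≤ _ := by
        rw [sum_mul_dirDot_eq_zero hd hs, zero_mul, sub_zero]
        exact sub_le_self _
          (mul_nonneg (inv_nonneg.2 (Finset.sum_nonneg fun i _ => hs_nonneg i)) hD)

end Polytope

theorem dirDot_vel_le_alphaR (ξ : Fin d → ℝ) (U V : MHDState) :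
    dirDot hd ξ (vel U) ≤ alphaR pfun hd ξ U V :=
  (le_max_left _ _).trans <|
    (le_add_of_nonneg_right (Real.sqrt_nonneg _)).trans <|
      le_add_of_nonneg_right (magJump_nonneg U V)

theorem alphaL_le_dirDot_vel (ξ : Fin d → ℝ) (U V : MHDState) :
    alphaL pfun hd ξ U V ≤ dirDot hd ξ (vel U) :=
  (sub_le_self _ (magJump_nonneg U V)).trans <|
    (sub_le_self _ (Real.sqrt_nonneg _)).trans <| min_le_left _ _

theorem alphaL_lt_alphaR {pfun : ℝ → ℝ → ℝ} (hEOS : IsEOS pfun) (ξ : Fin d → ℝ)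
    {Um Up : MHDState} (hm : Um ∈ Gset) (hp : Up ∈ Gset) :
    alphaL pfun hd ξ Um Up < alphaR pfun hd ξ Up Um := by
  have hL : alphaL pfun hd ξ Um Up < dirDot hd ξ (roeV Um Up) := by
    rw [alphaL, ← magJump]
    linarith [min_le_right (dirDot hd ξ (vel Um)) (dirDot hd ξ (roeV Um Up)),
      waveC_pos hd hEOS ξ hm, magJump_nonneg Um Up]
  have hR : dirDot hd ξ (roeV Um Up) < alphaR pfun hd ξ Up Um := by
    rw [alphaR, ← magJump, roeV_comm Up Um]
    linarith [le_max_right (dirDot hd ξ (vel Up)) (dirDot hd ξ (roeV Um Up)),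
      waveC_pos hd hEOS ξ hp, magJump_nonneg Up Um]
  exact hL.trans hR

theorem dirDot_vel_le_alphaHat {N : ℕ} {s : Fin N → ℝ} (hs : ∀ i, 0 ≤ s i)
    (ξ : Fin N → Fin d → ℝ) (U : Fin N → MHDState) (j : Fin N) :
    dirDot hd (ξ j) (vel (U j)) ≤ alphaHat pfun hd s ξ U j := by
  have hjump : 0 ≤ 2 * (∑ i, s i)⁻¹ * ∑ i, s i * magJump (U j) (U i) :=
    mul_nonneg (mul_nonneg zero_le_two (inv_nonneg.2 (Finset.sum_nonneg fun i _ => hs i)))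
      (Finset.sum_nonneg fun i _ => mul_nonneg (hs i) (magJump_nonneg _ _))
  exact (le_max_left _ _).trans <|
    (le_add_of_nonneg_right (Real.sqrt_nonneg _)).trans <| le_add_of_nonneg_right hjump

end Bounds

section HLL

variable (pfun : ℝ → ℝ → ℝ) {d : ℕ} (hd : d ≤ 3) {ξ : Fin d → ℝ} {Um Up : MHDState} {σm σp : ℝ}

theorem hllFlux_eq_dirFlux_add (hσ : σm < σp) (ξ : Fin d → ℝ) (Um Up : MHDState) :
    hllFlux pfun hd ξ Um Up σm σp =
      dirFlux pfun hd ξ Um + σm • (hllMid pfun hd ξ Um Up σm σp - Um) := by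
  have hne : σp - σm ≠ 0 := (sub_pos.2 hσ).ne'
  rw [hllFlux, hllMid]
  match_scalars <;> field_simp <;> ring

theorem dens_hllMid_nonneg (hσ : σm < σp) (hm : 0 ≤ dens Um) (hp : 0 ≤ dens Up)
    (hr : dirDot hd ξ (vel Up) ≤ σp) (hl : σm ≤ dirDot hd ξ (vel Um)) :
    0 ≤ dens (hllMid pfun hd ξ Um Up σm σp) := by
  have hdens : dens (hllMid pfun hd ξ Um Up σm σp) = (σp - σm)⁻¹ *
      ((σp - dirDot hd ξ (vel Up)) * dens Up + (dirDot hd ξ (vel Um) - σm) * dens Um) := by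
    have hFp := dens_dirFlux pfun hd ξ Up
    have hFm := dens_dirFlux pfun hd ξ Um
    simp only [dens] at hFp hFm
    simp only [dens, hllMid, Pi.smul_apply, Pi.add_apply, Pi.sub_apply, smul_eq_mul, hFp, hFm]
    ring
  rw [hdens]
  exact mul_nonneg (inv_nonneg.2 (sub_pos.2 hσ).le)
    (add_nonneg (mul_nonneg (sub_nonneg.2 hr) hp) (mul_nonneg (sub_nonneg.2 hl) hm))

theorem relEnergy_hllMid_add_nonneg (hξ : unitVec ξ) (hm : Um ∈ Gset) (hp : Up ∈ Gset)
    (hσ : σm < σp) (hr : alphaR pfun hd ξ Up Um ≤ σp) (hl : σm ≤ alphaL pfun hd ξ Um Up)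
    (vs Bs : Fin 3 → ℝ) :
    0 ≤ relEnergy (hllMid pfun hd ξ Um Up σm σp) vs Bs
      + (σp - σm)⁻¹ * (dirDot hd ξ (magB Up - magB Um) * dot3 vs Bs) := by
  have hne : σp - σm ≠ 0 := (sub_pos.2 hσ).ne'
  have hmid : relEnergy (hllMid pfun hd ξ Um Up σm σp) vs Bs
        + (σp - σm)⁻¹ * (dirDot hd ξ (magB Up - magB Um) * dot3 vs Bs) =
      (σp - σm)⁻¹ * (σp * relEnergy Up vs Bs - σm * relEnergy Um vs Bs
        - (relFlux pfun hd ξ Up vs Bs - relFlux pfun hd ξ Um vs Bs)) := by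
    simp only [relEnergy, relFlux, hllMid, dot8_eq_linearCombination, map_smul, map_add, map_sub,
      smul_eq_mul, dirDot_sub]
    field_simp
    ring
  rw [hmid]
  refine mul_nonneg (inv_nonneg.2 (sub_pos.2 hσ).le) (sub_nonneg.2 ?_)
  exact (relFlux_sub_relFlux_le pfun hd hξ hm hp vs Bs).trans <| sub_le_sub
    (mul_le_mul_of_nonneg_right hr (relEnergy_pos hp vs Bs).le)
    (mul_le_mul_of_nonneg_right hl (relEnergy_pos hm vs Bs).le)

/-- The HLL flux through an edge, with the upwind share of the Godunov–Powell penalty that the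
scheme attributes to the interior state `Um`. -/
def penalizedFlux (ξ : Fin d → ℝ) (Um Up : MHDState) (σm σp : ℝ) : MHDState :=
  hllFlux pfun hd ξ Um Up σm σp
    - (σm / (σp - σm) * dirDot hd ξ (magB Up - magB Um)) • source Um

/-- The part `−σ⁻ − η ρ^{−1/2} |⟨ξ, B⁻ − B⁺⟩|` of the CFL speed contributed by the outer state,
where `η = σ⁻/(σ⁺ − σ⁻)`. -/
def penalizedSpeed (ξ : Fin d → ℝ) (Um Up : MHDState) (σm σp : ℝ) : ℝ :=
  -σm - σm / (σp - σm) * (√(dens Um))⁻¹ * |dirDot hd ξ (magB Um - magB Up)|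

theorem dens_penalizedFlux_le (hσm : σm ≤ 0) (hσ : σm < σp) (hm : 0 ≤ dens Um)
    (hp : 0 ≤ dens Up) (hr : dirDot hd ξ (vel Up) ≤ σp) (hl : σm ≤ dirDot hd ξ (vel Um)) :
    dens (penalizedFlux pfun hd ξ Um Up σm σp) ≤
      (dirDot hd ξ (vel Um) + penalizedSpeed hd ξ Um Up σm σp) * dens Um := by
  have hdens : dens (penalizedFlux pfun hd ξ Um Up σm σp) =
      dens Um * dirDot hd ξ (vel Um) - σm * dens Um
        + σm * dens (hllMid pfun hd ξ Um Up σm σp) := by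
    have hF := dens_dirFlux pfun hd ξ Um
    simp only [dens] at hF
    simp only [penalizedFlux, hllFlux_eq_dirFlux_add pfun hd hσ, dens, source, mk, Pi.sub_apply,
      Pi.add_apply, Pi.smul_apply, smul_eq_mul, Matrix.cons_val_zero, hF]
    ring
  have hmid := mul_nonpos_of_nonpos_of_nonneg hσm (dens_hllMid_nonneg pfun hd hσ hm hp hr hl)
  have hη : σm / (σp - σm) ≤ 0 := div_nonpos_of_nonpos_of_nonneg hσm (sub_pos.2 hσ).le
  have hpenalty : σm / (σp - σm) * (√(dens Um))⁻¹ * |dirDot hd ξ (magB Um - magB Up)| *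
      dens Um ≤ 0 :=
    mul_nonpos_of_nonpos_of_nonneg (mul_nonpos_of_nonpos_of_nonneg
      (mul_nonpos_of_nonpos_of_nonneg hη (by positivity)) (abs_nonneg _)) hm
  rw [hdens, penalizedSpeed]
  linarith

theorem dot8_penalizedFlux_le (hξ : unitVec ξ) (hm : Um ∈ Gset) (hp : Up ∈ Gset) (hσm : σm ≤ 0)
    (hσ : σm < σp) (hr : alphaR pfun hd ξ Up Um ≤ σp) (hl : σm ≤ alphaL pfun hd ξ Um Up)
    (vs Bs : Fin 3 → ℝ) :
    dot8 (penalizedFlux pfun hd ξ Um Up σm σp) (nstar vs Bs) ≤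
      dot8 (dirFlux pfun hd ξ Um) (nstar vs Bs)
        + penalizedSpeed hd ξ Um Up σm σp * relEnergy Um vs Bs := by
  have hdot : dot8 (penalizedFlux pfun hd ξ Um Up σm σp) (nstar vs Bs) =
      dot8 (dirFlux pfun hd ξ Um) (nstar vs Bs) - σm * relEnergy Um vs Bs
        + σm * (relEnergy (hllMid pfun hd ξ Um Up σm σp) vs Bs
          + (σp - σm)⁻¹ * (dirDot hd ξ (magB Up - magB Um) * dot3 vs Bs))
        - σm / (σp - σm) * (dirDot hd ξ (magB Up - magB Um)
          * dot3 (vel Um - vs) (magB Um - Bs)) := by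
    have hsource := dot8_source_nstar Um vs Bs
    simp only [dot8_eq_linearCombination] at hsource
    simp only [penalizedFlux, hllFlux_eq_dirFlux_add pfun hd hσ, relEnergy,
      dot8_eq_linearCombination, map_smul, map_add, map_sub, smul_eq_mul, hsource]
    ring
  have hmid := mul_nonpos_of_nonpos_of_nonneg hσm
    (relEnergy_hllMid_add_nonneg pfun hd hξ hm hp hσ hr hl vs Bs)
  have hjump : dirDot hd ξ (magB Up - magB Um) * dot3 (vel Um - vs) (magB Um - Bs) ≤
      |dirDot hd ξ (magB Um - magB Up)| * ((√(dens Um))⁻¹ * relEnergy Um vs Bs) := by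
    refine (le_abs_self _).trans ?_
    rw [abs_mul, dirDot_sub, dirDot_sub, abs_sub_comm]
    exact mul_le_mul_of_nonneg_left (abs_dot3_sub_le_relEnergy hm vs Bs) (abs_nonneg _)
  have hη : σm / (σp - σm) ≤ 0 := div_nonpos_of_nonpos_of_nonneg hσm (sub_pos.2 hσ).le
  have hpenalty := mul_le_mul_of_nonpos_left hjump hη
  rw [hdot, penalizedSpeed]
  linarith

end HLL

section Scheme

theorem update_mem_Gset {ι κ : Type*} [Fintype ι] [Fintype κ] [Nonempty κ] {w : ι → ℝ}
    {b s α : κ → ℝ} {u : ι → MHDState} {x f : κ → MHDState} {τ : ℝ} (hw : ∀ i, 0 ≤ w i)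
    (hsum : ∑ i, w i + ∑ k, b k = 1) (hu : ∀ i, u i ∈ Gset) (hx : ∀ k, x k ∈ Gset) (hτ : 0 ≤ τ)
    (hcfl : ∀ k, τ * s k * α k < b k)
    (hdens : ∑ k, s k * dens (f k) ≤ ∑ k, s k * (α k * dens (x k)))
    (henergy : ∀ vs Bs, ∑ k, s k * dot8 (f k) (nstar vs Bs) ≤
      ∑ k, s k * (α k * relEnergy (x k) vs Bs)) :
    ∑ i, w i • u i + ∑ k, b k • x k - τ • ∑ k, s k • f k ∈ Gset := by
  rw [Gset_eq_GstarSet]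
  refine ⟨?_, fun vs Bs => ?_⟩
  · have hpos := affine_update_pos (LinearMap.proj 0 : MHDState →ₗ[ℝ] ℝ) 0 (u := u) (x := x)
      (f := f) hw hsum (fun i => by simpa [dens] using (hu i).1.le)
      (fun k => by simpa [dens] using (hx k).1) hτ hcfl (by simpa [dens] using hdens)
    exact hpos.trans_eq (add_zero _)
  · exact affine_update_pos (Fintype.linearCombination ℝ (nstar vs Bs)) (sq3 Bs / 2) hw hsum
      (fun i => (relEnergy_pos (hu i) vs Bs).le) (fun k => relEnergy_pos (hx k) vs Bs) hτ hcfl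
      (henergy vs Bs)

variable (pfun : ℝ → ℝ → ℝ) {d : ℕ} (hd : d ≤ 3) {N : ℕ} {κ : Type*} [Fintype κ]
  {len : Fin N → ℝ} {ξ : Fin N → Fin d → ℝ} {ω : κ → ℝ} {U : Fin N → κ → MHDState}

theorem sum_dot8_dirFlux_le (hlen : ∀ j, 0 ≤ len j) (hS : ∑ j, len j ≠ 0)
    (hGreen : ∑ j, len j • ξ j = 0) (hξ : ∀ j, unitVec (ξ j)) (hω : ∀ q, 0 ≤ ω q)
    (hU : ∀ j q, U j q ∈ Gset)
    (hLDF : ∑ j, ∑ q, len j * ω q * dirDot hd (ξ j) (magB (U j q)) = 0) (vs Bs : Fin 3 → ℝ) :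
    ∑ j, ∑ q, len j * ω q * dot8 (dirFlux pfun hd (ξ j) (U j q)) (nstar vs Bs) ≤
      ∑ j, ∑ q, len j * ω q *
        (alphaHat pfun hd len ξ (fun i => U i q) j * relEnergy (U j q) vs Bs) := by
  calc ∑ j, ∑ q, len j * ω q * dot8 (dirFlux pfun hd (ξ j) (U j q)) (nstar vs Bs)
      = ∑ j, ∑ q, len j * ω q * relFlux pfun hd (ξ j) (U j q) vs Bs
          + (∑ j, ∑ q, len j * ω q * dirDot hd (ξ j) (magB (U j q))) * dot3 vs Bs := by
        simp only [relFlux, Finset.sum_mul, ← Finset.sum_add_distrib]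
        exact Finset.sum_congr rfl fun j _ => Finset.sum_congr rfl fun q _ => by ring
    _ = ∑ q, ω q * ∑ j, len j * relFlux pfun hd (ξ j) (U j q) vs Bs := by
        rw [hLDF, zero_mul, add_zero, Finset.sum_comm]
        simp only [Finset.mul_sum, mul_assoc, mul_left_comm (ω _)]
    _ ≤ ∑ q, ω q * ∑ j, len j *
          (alphaHat pfun hd len ξ (fun i => U i q) j * relEnergy (U j q) vs Bs) :=
        Finset.sum_le_sum fun q _ => mul_le_mul_of_nonneg_left
          (sum_relFlux_le pfun hd hlen hS hGreen hξ (fun j => hU j q) vs Bs) (hω q)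
    _ = _ := by
        rw [Finset.sum_comm]
        simp only [Finset.mul_sum, mul_assoc, mul_left_comm (ω _)]

theorem penalized_update_mem_Gset [NeZero N] [Nonempty κ] {ι : Type*} [Fintype ι]
    (hlen : ∀ j, 0 < len j) (hξ : ∀ j, unitVec (ξ j)) (hGreen : ∑ j, len j • ξ j = 0)
    (hω : ∀ q, 0 ≤ ω q) {Uext : Fin N → κ → MHDState} (hU : ∀ j q, U j q ∈ Gset)
    (hUext : ∀ j q, Uext j q ∈ Gset) {Ut : ι → MHDState} (hUt : ∀ i, Ut i ∈ Gset)
    {wt : ι → ℝ} (hwt : ∀ i, 0 ≤ wt i) {wb : Fin N → κ → ℝ}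
    (hwsum : ∑ i, wt i + ∑ j, ∑ q, wb j q = 1)
    (hLDF : ∑ j, ∑ q, len j * ω q * dirDot hd (ξ j) (magB (U j q)) = 0)
    {σm σp : Fin N → κ → ℝ} (hσm : ∀ j q, σm j q ≤ 0) (hσ : ∀ j q, σm j q < σp j q)
    (hr : ∀ j q, alphaR pfun hd (ξ j) (Uext j q) (U j q) ≤ σp j q)
    (hl : ∀ j q, σm j q ≤ alphaL pfun hd (ξ j) (U j q) (Uext j q)) {τ : ℝ} (hτ : 0 ≤ τ)
    (hCFL : ∀ j q, τ * (len j * ω q) * (alphaHat pfun hd len ξ (fun i => U i q) j +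
      penalizedSpeed hd (ξ j) (U j q) (Uext j q) (σm j q) (σp j q)) < wb j q) :
    ∑ i, wt i • Ut i + ∑ j, ∑ q, wb j q • U j q - τ • ∑ j, ∑ q, (len j * ω q) •
      penalizedFlux pfun hd (ξ j) (U j q) (Uext j q) (σm j q) (σp j q) ∈ Gset := by
  have hlen' : ∀ j, 0 ≤ len j := fun j => (hlen j).le
  have hS : ∑ j, len j ≠ 0 := (Finset.sum_pos (fun j _ => hlen j) Finset.univ_nonempty).ne'
  have hs : ∀ j q, 0 ≤ len j * ω q := fun j q => mul_nonneg (hlen' j) (hω q)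
  rw [← Fintype.sum_prod_type'] at hwsum
  simp only [← Fintype.sum_prod_type']
  refine update_mem_Gset hwt hwsum hUt (fun k => hU k.1 k.2) hτ (fun k => hCFL k.1 k.2) ?_
    fun vs Bs => ?_
  · refine Finset.sum_le_sum fun k _ => mul_le_mul_of_nonneg_left ?_ (hs k.1 k.2)
    refine (dens_penalizedFlux_le pfun hd (hσm _ _) (hσ _ _) (hU _ _).1.le (hUext _ _).1.le
      ((dirDot_vel_le_alphaR pfun hd _ _ _).trans (hr _ _))
      ((hl _ _).trans (alphaL_le_dirDot_vel pfun hd _ _ _))).trans ?_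
    exact mul_le_mul_of_nonneg_right (add_le_add_left (dirDot_vel_le_alphaHat pfun hd hlen' ξ
      (fun i => U i k.2) k.1) _) (hU _ _).1.le
  · have hflux := sum_dot8_dirFlux_le pfun hd hlen' hS hGreen hξ hω hU hLDF vs Bs
    rw [← Fintype.sum_prod_type', ← Fintype.sum_prod_type'] at hflux
    calc _ ≤ ∑ k : Fin N × κ, len k.1 * ω k.2 *
            (dot8 (dirFlux pfun hd (ξ k.1) (U k.1 k.2)) (nstar vs Bs)
              + penalizedSpeed hd (ξ k.1) (U k.1 k.2) (Uext k.1 k.2) (σm k.1 k.2) (σp k.1 k.2)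
                * relEnergy (U k.1 k.2) vs Bs) :=
          Finset.sum_le_sum fun k _ => mul_le_mul_of_nonneg_left
            (dot8_penalizedFlux_le pfun hd (hξ _) (hU _ _) (hUext _ _) (hσm _ _) (hσ _ _)
              (hr _ _) (hl _ _) vs Bs) (hs k.1 k.2)
      _ ≤ _ := by
          simp only [add_mul, mul_add, Finset.sum_add_distrib]
          exact add_le_add_left hflux _

theorem twoD_high_order_scheme_PP_general {pfun : ℝ → ℝ → ℝ} (hEOS : IsEOS pfun) [NeZero N]
    [Nonempty κ] {ι : Type*} [Fintype ι] {areaK : ℝ} (hK : 0 < areaK) (hlen : ∀ j, 0 < len j)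
    (hξ : ∀ j, unitVec (ξ j)) (hGreen : ∑ j, len j • ξ j = 0) (hω : ∀ q, 0 < ω q)
    {Uint Uext : Fin N → κ → MHDState} (hUint : ∀ j q, Uint j q ∈ Gset)
    (hUext : ∀ j q, Uext j q ∈ Gset) {Ut : ι → MHDState} (hUt : ∀ q, Ut q ∈ Gset)
    {wt : ι → ℝ} (hwt : ∀ q, 0 ≤ wt q) {wb : Fin N → κ → ℝ}
    (hwsum : ∑ q, wt q + ∑ j, ∑ q, wb j q = 1) {Ubar : MHDState}
    (hUbar : Ubar = ∑ q, wt q • Ut q + ∑ j, ∑ q, wb j q • Uint j q)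
    (hLDF : ∑ j, ∑ q, len j * ω q * dirDot hd (ξ j) (magB (Uint j q)) = 0)
    {σr σl : Fin N → κ → ℝ} (hr : ∀ j q, alphaR pfun hd (ξ j) (Uext j q) (Uint j q) ≤ σr j q)
    (hl : ∀ j q, σl j q ≤ alphaL pfun hd (ξ j) (Uint j q) (Uext j q)) {η : Fin N → κ → ℝ}
    (hη : ∀ j q, η j q = min (σl j q) 0 / (max (σr j q) 0 - min (σl j q) 0))
    {Δt : ℝ} (hΔt : 0 ≤ Δt)
    (hCFL : ∀ j q, Δt * (len j / areaK) *
        (alphaHat pfun hd len ξ (fun i => Uint i q) j - min (σl j q) 0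
          - η j q * (√(dens (Uint j q)))⁻¹ * |dirDot hd (ξ j) (magB (Uint j q) - magB (Uext j q))|)
        < wb j q / ω q) :
    Ubar - (Δt / areaK) • ∑ j, ∑ q, (len j * ω q) •
      (hllFlux pfun hd (ξ j) (Uint j q) (Uext j q) (min (σl j q) 0) (max (σr j q) 0)
        - (η j q * dirDot hd (ξ j) (magB (Uext j q) - magB (Uint j q))) • source (Uint j q))
      ∈ Gset := by
  obtain rfl : η = fun j q => min (σl j q) 0 / (max (σr j q) 0 - min (σl j q) 0) := funext₂ hη
  rw [hUbar]
  refine penalized_update_mem_Gset pfun hd hlen hξ hGreen (fun q => (hω q).le) hUint hUext hUt hwt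
    hwsum hLDF (fun j q => min_le_right _ _) (fun j q => ?_)
    (fun j q => (hr j q).trans (le_max_left _ _)) (fun j q => (min_le_left _ _).trans (hl j q))
    (div_nonneg hΔt hK.le) fun j q => ?_
  · calc min (σl j q) 0 ≤ alphaL pfun hd (ξ j) (Uint j q) (Uext j q) :=
          (min_le_left _ _).trans (hl j q)
      _ < alphaR pfun hd (ξ j) (Uext j q) (Uint j q) :=
          alphaL_lt_alphaR hd hEOS (ξ j) (hUint j q) (hUext j q)
      _ ≤ max (σr j q) 0 := (hr j q).trans (le_max_left _ _)
  · refine lt_of_eq_of_lt ?_ ((lt_div_iff₀ (hω q)).1 (hCFL j q))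
    rw [penalizedSpeed]
    ring

end Scheme

/-- Theorem 4.3: positivity preservation of the high-order 2D DG scheme with
the upwind-discretized Godunov–Powell penalty term
(one cell, one forward-Euler step). -/
theorem twoD_high_order_scheme_PP (pfun : ℝ → ℝ → ℝ) (hEOS : IsEOS pfun)
    {N : ℕ} (hN : 1 ≤ N) {Q : ℕ} (hQ : 1 ≤ Q) {Qt : ℕ}
    (areaK : ℝ) (hK : 0 < areaK)
    (len : Fin N → ℝ) (hlen : ∀ j, 0 < len j)
    (ξ : Fin N → Fin 2 → ℝ) (hξ : ∀ j, unitVec (ξ j))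
    (hGreen : (∑ j, len j • ξ j) = 0)
    (ω : Fin Q → ℝ) (hω : ∀ q, 0 < ω q) (hωsum : (∑ q, ω q) = 1)
    (Uint Uext : Fin N → Fin Q → MHDState)
    (hUint : ∀ j q, Uint j q ∈ Gset) (hUext : ∀ j q, Uext j q ∈ Gset)
    (Ut : Fin Qt → MHDState) (hUt : ∀ q, Ut q ∈ Gset)
    (wt : Fin Qt → ℝ) (hwt : ∀ q, 0 < wt q)
    (wb : Fin N → Fin Q → ℝ) (hwb : ∀ j q, 0 < wb j q)
    (hwsum : (∑ q, wt q) + (∑ j, ∑ q, wb j q) = 1)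
    (Ubar : MHDState)
    (hUbar : Ubar = (∑ q, wt q • Ut q) + ∑ j, ∑ q, wb j q • Uint j q)
    (hLDF : (∑ j, ∑ q, len j * ω q * dirDot d2le3 (ξ j) (magB (Uint j q))) = 0)
    (σr σl : Fin N → Fin Q → ℝ)
    (hr : ∀ j q, alphaR pfun d2le3 (ξ j) (Uext j q) (Uint j q) ≤ σr j q)
    (hl : ∀ j q, σl j q ≤ alphaL pfun d2le3 (ξ j) (Uint j q) (Uext j q))
    (η : Fin N → Fin Q → ℝ)
    (hη : ∀ j q, η j q = min (σl j q) 0 / (max (σr j q) 0 - min (σl j q) 0))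
    (Δt : ℝ) (hΔt : 0 < Δt)
    (hCFL : ∀ j q, Δt * (len j / areaK) *
        (alphaHat pfun d2le3 len ξ (fun i => Uint i q) j - min (σl j q) 0
          - η j q * (Real.sqrt (dens (Uint j q)))⁻¹ *
              |dirDot d2le3 (ξ j) (magB (Uint j q) - magB (Uext j q))|)
        < wb j q / ω q) :
    Ubar - (Δt / areaK) •
        (∑ j, ∑ q, (len j * ω q) •
          (hllFlux pfun d2le3 (ξ j) (Uint j q) (Uext j q)
              (min (σl j q) 0) (max (σr j q) 0)
            - (η j q * dirDot d2le3 (ξ j) (magB (Uext j q) - magB (Uint j q))) •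
                source (Uint j q))) ∈ Gset := by
  have : NeZero N := ⟨Nat.one_le_iff_ne_zero.1 hN⟩
  have : Nonempty (Fin Q) := ⟨⟨0, hQ⟩⟩
  exact twoD_high_order_scheme_PP_general d2le3 hEOS hK hlen hξ hGreen hω hUint hUext hUt
    (fun q => (hwt q).le) hwsum hUbar hLDF hr hl hη hΔt.le hCFL

end MHD
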